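/- For a unary query Q on ordered unranked Σ-trees, the following are equivalent: (1) Q is definable in MSO; (2) Q = Q^∃_{QA} for some query automaton QA (existential semantics); (3) Q = Q^∀_{QA} for some query automaton QA (universal semantics). -/

import Mathlib

namespace UnrankedTrees

/-! ### Unranked trees: tree domains and ordered unranked Σ-trees.
Nodes are finite strings over ℕ; a tree domain is a finite prefix-closed set
of nodes such that `s ++ [i] ∈ D` implies `s ++ [j] ∈ D` for all `j < i`. -/

abbrev Node : Type := List ℕ

/-- An ordered unranked tree over alphabet `A`: a tree domain with a labeling. -/
structure UTree (A : Type) where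
  dom : Finset Node
  nil_mem : ([] : Node) ∈ dom
  prefix_closed : ∀ ⦃s t : Node⦄, s ∈ dom → t <+: s → t ∈ dom
  sib_closed : ∀ ⦃s : Node⦄ ⦃i j : ℕ⦄, s ++ [i] ∈ dom → j < i → s ++ [j] ∈ dom
  label : Node → A

namespace UTree

variable {A : Type}

/-- The child relation `≺_ch`. -/
def childR (T : UTree A) (s t : Node) : Prop :=
  s ∈ T.dom ∧ t ∈ T.dom ∧ ∃ i : ℕ, t = s ++ [i]

/-- The descendant-or-self relation `≺*_ch` (the prefix relation). -/
def descR (T : UTree A) (s t : Node) : Prop :=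
  s ∈ T.dom ∧ t ∈ T.dom ∧ s <+: t

/-- The next-sibling relation `≺_ns`. -/
def nsR (T : UTree A) (s t : Node) : Prop :=
  s ∈ T.dom ∧ t ∈ T.dom ∧ ∃ (u : Node) (i : ℕ), s = u ++ [i] ∧ t = u ++ [i + 1]

/-- The sibling ordering `≺*_ns` (reflexive-transitive closure of next-sibling). -/
def sibR (T : UTree A) (s t : Node) : Prop :=
  s ∈ T.dom ∧ t ∈ T.dom ∧ ∃ (u : Node) (i j : ℕ), s = u ++ [i] ∧ t = u ++ [j] ∧ i ≤ j

/-- The first-child relation `≺_fc`. -/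
def firstChildR (T : UTree A) (s t : Node) : Prop :=
  s ∈ T.dom ∧ t ∈ T.dom ∧ t = s ++ [0]

/-- The number of children of a node. -/
noncomputable def childCount (T : UTree A) (s : Node) : ℕ :=
  Set.ncard {i : ℕ | s ++ [i] ∈ T.dom}

/-- The list of children of a node `s`, in sibling order: `s·0, …, s·(n-1)`. -/
noncomputable def childrenList (T : UTree A) (s : Node) : List Node :=
  (List.range (T.childCount s)).map fun i => s ++ [i]

/-- `s` is a leaf of `T`. -/
def isLeaf (T : UTree A) (s : Node) : Prop :=
  s ∈ T.dom ∧ ∀ i : ℕ, s ++ [i] ∉ T.dom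

/-- `s` has no next sibling in `T` (the root also counts as "last"). -/
def isLast (T : UTree A) (s : Node) : Prop :=
  s = [] ∨ ∃ (u : Node) (i : ℕ), s = u ++ [i] ∧ u ++ [i + 1] ∉ T.dom

end UTree

/-! ### MSO over ordered unranked trees.
First-order variables and monadic second-order variables are indexed by ℕ.
First-order quantifiers range over the nodes of the tree, set quantifiers over
sets of nodes of the tree. -/

inductive MSO (A : Type) : Type where
  | eq : ℕ → ℕ → MSO A
  | desc : ℕ → ℕ → MSO A               -- x ≺*_ch y
  | sib : ℕ → ℕ → MSO A                -- x ≺*_ns y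
  | lab : A → ℕ → MSO A                -- P_a(x)
  | mem : ℕ → ℕ → MSO A                -- X(x)
  | not : MSO A → MSO A
  | and : MSO A → MSO A → MSO A
  | exFO : ℕ → MSO A → MSO A
  | exSO : ℕ → MSO A → MSO A

namespace MSO

variable {A : Type}

def Sat (T : UTree A) (v : ℕ → Node) (V : ℕ → Set Node) : MSO A → Prop
  | .eq x y => v x = v y
  | .desc x y => T.descR (v x) (v y)
  | .sib x y => T.sibR (v x) (v y)
  | .lab a x => v x ∈ T.dom ∧ T.label (v x) = a
  | .mem X x => v x ∈ V X
  | .not φ => ¬ Sat T v V φ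
  | .and φ ψ => Sat T v V φ ∧ Sat T v V ψ
  | .exFO n φ => ∃ s ∈ T.dom, Sat T (Function.update v n s) V φ
  | .exSO n φ => ∃ S : Set Node, S ⊆ ↑T.dom ∧ Sat T v (Function.update V n S) φ

/-- `φ`, as a sentence, defines the set `L` of trees.  (Quantifying over all
valuations forces the truth value to be independent of the valuation, i.e.
`φ` behaves as a sentence.) -/
def DefinesB (φ : MSO A) (L : Set (UTree A)) : Prop :=
  ∀ (T : UTree A) (v : ℕ → Node) (V : ℕ → Set Node), T ∈ L ↔ Sat T v V φ

/-- `φ`, as a formula whose only free variable is the first-order variable `0`,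
defines the unary query `Q`. -/
def DefinesU (φ : MSO A) (Q : UTree A → Set Node) : Prop :=
  ∀ (T : UTree A) (v : ℕ → Node) (V : ℕ → Set Node) (s : Node), s ∈ T.dom →
    (s ∈ Q T ↔ Sat T (Function.update v 0 s) V φ)

end MSO

/-! ### Nondeterministic unranked tree automata (NUTA). -/

/-- A nondeterministic unranked tree automaton: finitely many states, final
states `F`, and `δ(q,a)` a regular language over the states, given by a
regular expression. -/
structure NUTA (A : Type) where
  Q : Type
  fintype_Q : Fintype Q
  F : Set Q
  δ : Q → A → RegularExpression Q

namespace NUTA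

variable {A : Type}

/-- `ρ` is a run of `N` on `T`: at every node `s` labelled `a` with children
`s·0, …, s·(n-1)`, the string `ρ(s·0) ⋯ ρ(s·(n-1))` lies in `δ(ρ(s), a)`. -/
def IsRun (N : NUTA A) (T : UTree A) (ρ : Node → N.Q) : Prop :=
  ∀ s ∈ T.dom, ((T.childrenList s).map ρ) ∈ (N.δ (ρ s) (T.label s)).matches'

/-- A tree is accepted if some run puts the root in a final state. -/
def Accepts (N : NUTA A) (T : UTree A) : Prop :=
  ∃ ρ : Node → N.Q, N.IsRun T ρ ∧ ρ [] ∈ N.F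

end NUTA

/-- A set of unranked trees is regular if it is the language of some NUTA. -/
def RegularLang {A : Type} (L : Set (UTree A)) : Prop :=
  ∃ N : NUTA A, ∀ T : UTree A, N.Accepts T ↔ T ∈ L

/-! ### Query automata. -/

/-- A query automaton: a NUTA together with a selection set `S ⊆ Q × Σ`. -/
structure QAut (A : Type) where
  N : NUTA A
  S : Set (N.Q × A)

namespace QAut

variable {A : Type}

/-- Existential semantics: `s` is selected iff `(ρ(s), λ_T(s)) ∈ S` for
*some* accepting run `ρ`. -/
def existsSem (QA : QAut A) (T : UTree A) : Set Node :=
  {s | s ∈ T.dom ∧ ∃ ρ : Node → QA.N.Q, QA.N.IsRun T ρ ∧ ρ [] ∈ QA.N.F ∧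
    (ρ s, T.label s) ∈ QA.S}

/-- Universal semantics: `s` is selected iff `(ρ(s), λ_T(s)) ∈ S` for
*every* accepting run `ρ`. -/
def forallSem (QA : QAut A) (T : UTree A) : Set Node :=
  {s | s ∈ T.dom ∧ ∀ ρ : Node → QA.N.Q, QA.N.IsRun T ρ → ρ [] ∈ QA.N.F →
    (ρ s, T.label s) ∈ QA.S}

end QAut

/-! Reading a tree bottom up and left to right, with one transition that adds the value of the next
child to the value of its parent, makes tree automata behave like word automata: they are
determinized by the powerset construction and closed under relabelling guesses. By induction on an
MSO formula, the trees labelled with a valuation that satisfies it are therefore recognized by a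
finite automaton. A query automaton guesses the valuation of the free variable along with the run,
and Kleene's theorem turns the child words allowed at a state into regular expressions.

Conversely, the labelling of every node by its state and by the state of a deterministic word
automaton running over its left siblings is constrained only by conditions on neighbouring nodes,
and set quantifiers can guess such a labelling. Complementing the selection set exchanges the
existential semantics of a query for the universal semantics of its complement. -/

/-! ### Kleene's theorem -/

section Kleene

open scoped Computability

variable {α : Type*}

/-- A language is rational if it is denoted by some regular expression. -/
def IsRational (L : Language α) : Prop := ∃ P : RegularExpression α, P.matches' = L

namespace IsRational

variable {L M : Language α}

theorem zero : IsRational (0 : Language α) := ⟨0, RegularExpression.matches'_zero⟩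

theorem one : IsRational (1 : Language α) := ⟨1, RegularExpression.matches'_epsilon⟩

theorem char (a : α) : IsRational ({[a]} : Language α) :=
  ⟨.char a, RegularExpression.matches'_char a⟩

theorem add : IsRational L → IsRational M → IsRational (L + M) := by
  rintro ⟨P, rfl⟩ ⟨P', rfl⟩
  exact ⟨P + P', RegularExpression.matches'_add P P'⟩

theorem mul : IsRational L → IsRational M → IsRational (L * M) := by
  rintro ⟨P, rfl⟩ ⟨P', rfl⟩
  exact ⟨P * P', RegularExpression.matches'_mul P P'⟩

theorem kstar : IsRational L → IsRational (L∗) := by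
  rintro ⟨P, rfl⟩
  exact ⟨P.star, RegularExpression.matches'_star P⟩

theorem sum {ι : Type*} (s : Finset ι) {L : ι → Language α} (h : ∀ i ∈ s, IsRational (L i)) :
    IsRational (∑ i ∈ s, L i) :=
  Finset.sum_induction L IsRational (fun _ _ => add) zero h

end IsRational

theorem mem_languageSum_iff {ι : Type*} {s : Finset ι} {L : ι → Language α} {w : List α} :
    w ∈ ∑ i ∈ s, L i ↔ ∃ i ∈ s, w ∈ L i := by
  classical
  induction s using Finset.induction with
  | empty => simp [Language.notMem_zero]
  | insert i s hi ih => rw [Finset.sum_insert hi, Language.mem_add, ih, Finset.exists_mem_insert]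

/-- Gaussian elimination: Arden's lemma solves one equation at a time. -/
theorem isRational_of_linear_system {σ : Type*} {S : Finset σ} {C : σ → σ → Language α}
    {D X : σ → Language α} (hC : ∀ i j, IsRational (C i j)) (hε : ∀ i j, [] ∉ C i j)
    (hD : ∀ i, IsRational (D i)) (hX : ∀ i ∈ S, X i = ∑ j ∈ S, C i j * X j + D i) :
    ∀ i ∈ S, IsRational (X i) := by
  classical
  induction S using Finset.induction generalizing C D with
  | empty => simp
  | insert r S hr ih =>
    have pivot : X r = (C r r)∗ * (∑ j ∈ S, C r j * X j + D r) := by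
      rw [← Language.self_eq_mul_add_iff (hε r r), ← add_assoc,
        ← Finset.sum_insert (f := fun j => C r j * X j) hr]
      exact hX r (S.mem_insert_self r)
    have eliminate : ∀ i ∈ S, X i = ∑ j ∈ S, (C i j + C i r * (C r r)∗ * C r j) * X j
        + (D i + C i r * (C r r)∗ * D r) := fun i hi =>
      calc X i = C i r * X r + ∑ j ∈ S, C i j * X j + D i := by
            rw [hX i (Finset.mem_insert_of_mem hi), Finset.sum_insert hr]
        _ = _ := by
            rw [pivot]
            simp only [mul_add, add_mul, Finset.sum_add_distrib, Finset.mul_sum, mul_assoc]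
            abel
    have rational := ih
      (fun i j => (hC i j).add (((hC i r).mul (hC r r).kstar).mul (hC r j)))
      (fun i j => by simp only [Language.mem_add, Language.mem_mul, List.append_eq_nil_iff]; grind)
      (fun i => (hD i).add (((hC i r).mul (hC r r).kstar).mul (hD r))) eliminate
    intro i hi
    obtain rfl | hi := Finset.mem_insert.1 hi
    · rw [pivot]
      have sum := IsRational.sum S fun j hj => (hC i j).mul (rational j hj)
      exact (hC i i).kstar.mul (sum.add (hD i))
    · exact rational i hi

theorem mem_singletonWord_iff {a : α} {w : List α} : w ∈ ({[a]} : Language α) ↔ w = [a] := Iff.rfl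

theorem acceptsFrom_eq_sum [Fintype α] {σ : Type*} (M : DFA α σ) [DecidablePred (· ∈ M.accept)]
    (p : σ) : M.acceptsFrom p =
      ∑ a, {[a]} * M.acceptsFrom (M.step p a) + if p ∈ M.accept then 1 else 0 := by
  ext w
  rw [Language.mem_add, mem_languageSum_iff]
  cases w with
  | nil =>
    split_ifs with hp <;>
      simp [Language.mem_mul, mem_singletonWord_iff, DFA.mem_acceptsFrom, Language.notMem_zero, hp]
  | cons a w =>
    split_ifs <;>
      simp [Language.mem_mul, mem_singletonWord_iff, DFA.mem_acceptsFrom, Language.notMem_zero,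
        Language.mem_one]

theorem isRational_acceptsFrom [Finite α] {σ : Type*} [Finite σ] (M : DFA α σ) (p : σ) :
    IsRational (M.acceptsFrom p) := by
  classical
  cases nonempty_fintype α
  cases nonempty_fintype σ
  refine isRational_of_linear_system (S := Finset.univ) (X := M.acceptsFrom)
    (C := fun p q => ∑ a with M.step p a = q, {[a]}) (D := fun p => if p ∈ M.accept then 1 else 0)
    (fun p q => .sum _ fun a _ => .char a) (fun p q => ?_) (fun p => ?_) (fun p _ => ?_)
    p (Finset.mem_univ p)
  · simp [mem_languageSum_iff, mem_singletonWord_iff]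
  · split_ifs
    exacts [.one, .zero]
  · rw [acceptsFrom_eq_sum M p]
    congr 1
    simp only [Finset.sum_mul]
    rw [← Finset.sum_fiberwise Finset.univ (M.step p)]
    refine Finset.sum_congr rfl fun q _ => Finset.sum_congr rfl fun a ha => ?_
    rw [(Finset.mem_filter.1 ha).2]

theorem IsRational.of_isRegular [Finite α] {L : Language α} (hL : L.IsRegular) : IsRational L := by
  obtain ⟨σ, _, M, rfl⟩ := hL
  exact isRational_acceptsFrom M M.start

theorem mem_languageSSup_iff {S : Set (Language α)} {w : List α} : w ∈ sSup S ↔ ∃ L ∈ S, w ∈ L :=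
  Iff.rfl

/-- The sums of members of `G` are closed under left quotients, so a member of `G` has only
finitely many of them. -/
theorem isRegular_of_leftQuotient_generators {G : Set (Language α)} (hG : G.Finite)
    (quotient : ∀ L ∈ G, ∀ a, ∃ S ⊆ G, L.leftQuotient [a] = sSup S) {L : Language α} (hL : L ∈ G) :
    L.IsRegular := by
  have closed : ∀ w, ∃ S ⊆ G, L.leftQuotient w = sSup S := fun w => by
    induction w using List.reverseRecOn with
    | nil => exact ⟨{L}, Set.singleton_subset_iff.2 hL, sSup_singleton.symm⟩
    | append_singleton w a ih =>
      obtain ⟨S, hSG, hS⟩ := ih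
      choose! R hRG hR using quotient
      refine ⟨⋃ K ∈ S, R K a, Set.iUnion₂_subset fun K hK => hRG K (hSG hK) a, ?_⟩
      ext u
      simp only [Language.leftQuotient_append, hS, Language.mem_leftQuotient, mem_languageSSup_iff,
        Set.mem_iUnion₂]
      have mem_R : ∀ K ∈ S, ([a] ++ u ∈ K ↔ ∃ J ∈ R K a, u ∈ J) := fun K hK => by
        rw [← mem_languageSSup_iff, ← hR K (hSG hK) a, Language.mem_leftQuotient]
      grind
  refine .of_finite_range_leftQuotient ((hG.finite_subsets.image sSup).subset ?_)
  rintro _ ⟨w, rfl⟩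
  obtain ⟨S, hSG, hS⟩ := closed w
  exact ⟨S, hSG, hS.symm⟩

theorem leftQuotient_mul (L M : Language α) (a : α) [Decidable ([] ∈ L)] :
    (L * M).leftQuotient [a] =
      L.leftQuotient [a] * M + if [] ∈ L then M.leftQuotient [a] else 0 := by
  ext w
  simp only [Language.mem_leftQuotient, Language.mem_mul, Language.mem_add, List.singleton_append]
  constructor
  · rintro ⟨_ | ⟨b, u⟩, hu, v, hv, huv⟩
    · rw [if_pos hu]
      obtain rfl : v = a :: w := huv
      exact .inr hv
    · obtain ⟨rfl, rfl⟩ := List.cons.inj huv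
      exact .inl ⟨u, hu, v, hv, rfl⟩
  · rintro (⟨u, hu, v, hv, rfl⟩ | hw)
    · exact ⟨a :: u, hu, v, hv, rfl⟩
    · split_ifs at hw with hL
      · exact ⟨[], hL, a :: w, hw, rfl⟩
      · exact absurd hw (Language.notMem_zero w)

theorem leftQuotient_kstar (L : Language α) (a : α) :
    L∗.leftQuotient [a] = L.leftQuotient [a] * L∗ := by
  ext w
  simp only [Language.mem_leftQuotient, Language.mem_mul, List.singleton_append]
  constructor
  · rw [Language.mem_kstar_iff_exists_nonempty]
    rintro ⟨_ | ⟨u, W⟩, hw, hW⟩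
    · simp at hw
    · obtain ⟨b, u, rfl⟩ := List.exists_cons_of_ne_nil (hW u List.mem_cons_self).2
      obtain ⟨rfl, rfl⟩ := List.cons.inj hw
      exact ⟨u, (hW _ List.mem_cons_self).1, W.flatten,
        Language.join_mem_kstar fun v hv => (hW v (List.mem_cons_of_mem _ hv)).1, rfl⟩
  · rintro ⟨u, hu, v, hv, rfl⟩
    have huv : (a :: u) ++ v ∈ L * L∗ := Language.append_mem_mul hu hv
    exact (mul_kstar_le_kstar : L * L∗ ≤ L∗) huv

theorem leftQuotient_mem_range {L K : Language α} (hK : K ∈ Set.range L.leftQuotient) (a : α) :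
    K.leftQuotient [a] ∈ Set.range L.leftQuotient := by
  obtain ⟨w, rfl⟩ := hK
  exact ⟨w ++ [a], L.leftQuotient_append w [a]⟩

theorem isRegular_mul {L M : Language α} (hL : L.IsRegular) (hM : M.IsRegular) :
    (L * M).IsRegular := by
  classical
  refine isRegular_of_leftQuotient_generators
    ((hL.finite_range_leftQuotient.image (· * M)).union hM.finite_range_leftQuotient)
    ?_ (.inl ⟨L, ⟨[], rfl⟩, rfl⟩)
  rintro _ (⟨K, hK, rfl⟩ | hK) a
  · have left : K.leftQuotient [a] * M ∈ (· * M) '' Set.range L.leftQuotient :=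
      ⟨_, leftQuotient_mem_range hK a, rfl⟩
    rw [leftQuotient_mul]
    split_ifs
    · exact ⟨{_, _}, Set.pair_subset (.inl left) (.inr ⟨[a], rfl⟩), sSup_pair.symm⟩
    · exact ⟨{_}, Set.singleton_subset_iff.2 (.inl left), by rw [sSup_singleton, add_zero]⟩
  · exact ⟨{_}, Set.singleton_subset_iff.2 (.inr (leftQuotient_mem_range hK a)),
      sSup_singleton.symm⟩

theorem isRegular_kstar {L : Language α} (hL : L.IsRegular) : L∗.IsRegular := by
  classical
  have generator : ∀ {K}, K ∈ Set.range L.leftQuotient →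
      K * L∗ ∈ insert L∗ ((· * L∗) '' Set.range L.leftQuotient) := fun hK => .inr ⟨_, hK, rfl⟩
  refine isRegular_of_leftQuotient_generators
    ((hL.finite_range_leftQuotient.image (· * L∗)).insert L∗) ?_ (.inl rfl)
  rintro _ (rfl | ⟨K, hK, rfl⟩) a
  · rw [leftQuotient_kstar]
    exact ⟨{_}, Set.singleton_subset_iff.2 (generator ⟨[a], rfl⟩), sSup_singleton.symm⟩
  · rw [leftQuotient_mul, leftQuotient_kstar]
    have left := generator (leftQuotient_mem_range hK a)
    split_ifs
    · exact ⟨{_, _}, Set.pair_subset left (generator ⟨[a], rfl⟩), sSup_pair.symm⟩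
    · exact ⟨{_}, Set.singleton_subset_iff.2 left, by rw [sSup_singleton, add_zero]⟩

theorem leftQuotient_one (a : α) : (1 : Language α).leftQuotient [a] = 0 := by
  ext w
  simp [Language.mem_one, Language.notMem_zero]

theorem isRegular_char (a : α) : ({[a]} : Language α).IsRegular := by
  refine isRegular_of_leftQuotient_generators (G := {1, {[a]}}) (by simp) ?_ (.inr rfl)
  rintro _ (rfl | rfl) b
  · exact ⟨∅, Set.empty_subset _, (leftQuotient_one b).trans sSup_empty.symm⟩
  · by_cases hab : b = a
    · refine ⟨{1}, Set.singleton_subset_iff.2 (.inl rfl), ?_⟩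
      ext w
      simp [mem_singletonWord_iff, Language.mem_one, hab]
    · refine ⟨∅, Set.empty_subset _, Eq.trans ?_ sSup_empty.symm⟩
      ext w
      exact iff_of_false (by simp [mem_singletonWord_iff, hab]) (Language.notMem_zero w)

theorem isRegular_matches' (P : RegularExpression α) : P.matches'.IsRegular := by
  induction P with
  | zero =>
    refine isRegular_of_leftQuotient_generators (Set.finite_singleton 0) ?_ rfl
    rintro _ rfl a
    exact ⟨∅, Set.empty_subset _, sSup_empty.symm⟩
  | epsilon =>
    refine isRegular_of_leftQuotient_generators (Set.finite_singleton 1) ?_ rfl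
    rintro _ rfl a
    exact ⟨∅, Set.empty_subset _, (leftQuotient_one a).trans sSup_empty.symm⟩
  | char a => exact isRegular_char a
  | plus P P' hP hP' => exact hP.add hP'
  | comp P P' hP hP' => exact isRegular_mul hP hP'
  | star P hP => exact isRegular_kstar hP

theorem exists_common_dfa {ι : Type} [Finite ι] {L : ι → Language α}
    (hL : ∀ i, (L i).IsRegular) : ∃ (σ : Type) (_ : Finite σ) (step : σ → α → σ) (start : σ)
      (accept : ι → Set σ), ∀ i w, w ∈ L i ↔ w.foldl step start ∈ accept i := by
  choose σ _ M hM using hL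
  let step (p : ∀ i, σ i) (a : α) (i : ι) : σ i := (M i).step (p i) a
  have foldl_step : ∀ (w : List α) (p : ∀ i, σ i) i,
      w.foldl step p i = w.foldl (M i).step (p i) := fun w => by
    induction w with
    | nil => exact fun _ _ => rfl
    | cons a _ ih => exact fun p => ih (step p a)
  refine ⟨∀ i, σ i, inferInstance, step, fun i => (M i).start, fun i => {p | p i ∈ (M i).accept},
    fun i w => ?_⟩
  rw [← hM i, DFA.mem_accepts, Set.mem_ofPred_eq, foldl_step]
  rfl

end Kleene

/-! ### Recursion on trees along siblings -/

namespace UTree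

variable {A B : Type}

theorem mem_dom_iff_lt_childCount (T : UTree A) (s : Node) (i : ℕ) :
    s ++ [i] ∈ T.dom ↔ i < T.childCount s := by
  have lower : IsLowerSet {i | s ++ [i] ∈ T.dom} := fun i j hji hi =>
    hji.eq_or_lt.elim (fun h => h ▸ hi) (T.sib_closed hi)
  have finite : {i | s ++ [i] ∈ T.dom}.Finite :=
    T.dom.finite_toSet.preimage fun i _ j _ hij => by simpa using hij
  obtain h | ⟨n, h⟩ := lower.eq_univ_or_Iio
  · exact absurd (h ▸ finite) Set.infinite_univ
  · have count : T.childCount s = n := by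
      rw [childCount, h, ← Finset.coe_Iio, Set.ncard_coe_finset, Nat.card_Iio]
    rw [count]
    exact Set.ext_iff.1 h i

theorem mem_dom_of_append (T : UTree A) {s t : Node} (h : s ++ t ∈ T.dom) : s ∈ T.dom :=
  T.prefix_closed h (List.prefix_append s t)

/-- The length of a longest branch. -/
def height (T : UTree A) : ℕ := T.dom.sup List.length

theorem length_le_height (T : UTree A) {s : Node} (hs : s ∈ T.dom) : s.length ≤ T.height :=
  Finset.le_sup (f := List.length) hs

/-- Trees are built from single nodes by attaching, on the right of the first `i` subtrees of `s`,
the complete subtree at `s ++ [i]`. -/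
theorem subtree_induction (T : UTree A) {motive : Node → ℕ → Prop}
    (zero : ∀ s ∈ T.dom, motive s 0)
    (succ : ∀ s i, s ++ [i] ∈ T.dom → motive s i →
      motive (s ++ [i]) (T.childCount (s ++ [i])) → motive s (i + 1))
    (s : Node) (hs : s ∈ T.dom) : ∀ i ≤ T.childCount s, motive s i
  | 0, _ => zero s hs
  | i + 1, hi =>
    have hsi : s ++ [i] ∈ T.dom := (T.mem_dom_iff_lt_childCount s i).2 hi
    succ s i hsi (T.subtree_induction zero succ s hs i (Nat.le_of_lt hi))
      (T.subtree_induction zero succ (s ++ [i]) hsi _ le_rfl)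
termination_by i => (T.height - s.length, i)
decreasing_by
  · exact Prod.Lex.right _ i.lt_succ_self
  · have := T.length_le_height hsi
    rw [List.length_append, List.length_singleton] at this ⊢
    exact Prod.Lex.left _ _ (by omega)

/-- The nodes of the part of `T` that consists of `s` and its first `i` subtrees. -/
def upTo (T : UTree A) (s : Node) (i : ℕ) : Set Node :=
  {t | t ∈ T.dom ∧ (t = s ∨ ∃ j < i, s ++ [j] <+: t)}

theorem upTo_zero (T : UTree A) {s : Node} (hs : s ∈ T.dom) : T.upTo s 0 = {s} := by
  ext t
  simp only [upTo, Nat.not_lt_zero, false_and, exists_false, or_false, Set.mem_ofPred_eq,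
    Set.mem_singleton_iff, and_iff_right_iff_imp]
  exact fun h => h ▸ hs

theorem prefix_iff_eq_or_exists_child {s t : Node} :
    s <+: t ↔ t = s ∨ ∃ j, s ++ [j] <+: t := by
  constructor
  · rintro ⟨_ | ⟨j, u⟩, rfl⟩
    · exact .inl s.append_nil
    · exact .inr ⟨j, u, by simp⟩
  · rintro (rfl | ⟨j, h⟩)
    · exact List.prefix_rfl
    · exact (List.prefix_append s [j]).trans h

theorem mem_upTo_childCount_iff (T : UTree A) {s t : Node} :
    t ∈ T.upTo s (T.childCount s) ↔ t ∈ T.dom ∧ s <+: t := by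
  rw [prefix_iff_eq_or_exists_child]
  refine and_congr_right fun ht => or_congr_right (exists_congr fun j => ?_)
  exact and_iff_right_of_imp fun h => (T.mem_dom_iff_lt_childCount s j).1 (T.prefix_closed ht h)

theorem upTo_succ (T : UTree A) (s : Node) (i : ℕ) :
    T.upTo s (i + 1) = T.upTo s i ∪ T.upTo (s ++ [i]) (T.childCount (s ++ [i])) := by
  ext t
  rw [Set.mem_union, mem_upTo_childCount_iff]
  simp only [upTo, Set.mem_ofPred_eq, Nat.exists_lt_succ_right]
  rw [← and_or_left, or_assoc]

theorem notMem_upTo_of_prefix (T : UTree A) {s t : Node} {i : ℕ} (h : s ++ [i] <+: t) :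
    t ∉ T.upTo s i := by
  rintro ⟨-, rfl | ⟨j, hj, hjt⟩⟩
  · simpa using h.length_le
  · have := List.prefix_of_prefix_length_le hjt h (by simp)
    simp at this
    omega

theorem disjoint_upTo (T : UTree A) (s : Node) (i : ℕ) :
    Disjoint (T.upTo s i) (T.upTo (s ++ [i]) (T.childCount (s ++ [i]))) :=
  Set.disjoint_right.2 fun _ ht =>
    T.notMem_upTo_of_prefix (T.mem_upTo_childCount_iff.1 ht).2

/-- The tree with the same nodes as `T` and labels `β`. -/
def relabel (T : UTree A) (β : Node → B) : UTree B :=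
  { T with label := β }

theorem childCount_relabel (T : UTree A) (β : Node → B) (s : Node) :
    (T.relabel β).childCount s = T.childCount s := rfl

end UTree

/-! ### Stepwise automata and recognizable node properties -/

/-- A deterministic stepwise tree automaton. It reads an unranked tree as if it were binary: the
state `init b` of a single node labelled `b` is combined with the states of the subtrees of its
children one after the other. States and labels need not be finite. -/
structure StepwiseAut (B Q : Type) where
  init : B → Q
  step : Q → Q → Q

namespace StepwiseAut

variable {B Q : Type} (M : StepwiseAut B Q)

/-- The state of the part of `T` that consists of `s` and its first `i` subtrees. Indices beyond the
last child are ignored. -/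
noncomputable def eval (T : UTree B) (s : Node) : ℕ → Q
  | 0 => M.init (T.label s)
  | i + 1 =>
    open Classical in
    if _ : s ++ [i] ∈ T.dom then
      M.step (eval T s i) (eval T (s ++ [i]) (T.childCount (s ++ [i])))
    else eval T s i
termination_by i => (T.height - s.length, i)
decreasing_by
  · exact Prod.Lex.right _ i.lt_succ_self
  · have := T.length_le_height ‹_›
    rw [List.length_append, List.length_singleton] at this ⊢
    exact Prod.Lex.left _ _ (by omega)
  · exact Prod.Lex.right _ i.lt_succ_self

theorem eval_zero (T : UTree B) (s : Node) : M.eval T s 0 = M.init (T.label s) := by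
  rw [eval]

theorem eval_succ (T : UTree B) {s : Node} {i : ℕ} (h : s ++ [i] ∈ T.dom) :
    M.eval T s (i + 1) =
      M.step (M.eval T s i) (M.eval T (s ++ [i]) (T.childCount (s ++ [i]))) := by
  rw [eval, dif_pos h]

theorem eval_unique (T : UTree B) {f : Node → ℕ → Q}
    (zero : ∀ s ∈ T.dom, f s 0 = M.init (T.label s))
    (succ : ∀ s i, s ++ [i] ∈ T.dom →
      f s (i + 1) = M.step (f s i) (f (s ++ [i]) (T.childCount (s ++ [i])))) :
    ∀ s ∈ T.dom, ∀ i ≤ T.childCount s, M.eval T s i = f s i :=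
  T.subtree_induction (fun s hs => by rw [eval_zero, zero s hs])
    fun s i hsi left last => by rw [M.eval_succ T hsi, succ s i hsi, left, last]

theorem eval_relabel_congr {A : Type} (T : UTree A) {β γ : Node → B} :
    ∀ s ∈ T.dom, ∀ i ≤ T.childCount s, (∀ t ∈ T.upTo s i, β t = γ t) →
      M.eval (T.relabel β) s i = M.eval (T.relabel γ) s i := by
  refine T.subtree_induction (fun s hs agree => ?_) fun s i hsi left last agree => ?_
  · rw [eval_zero, eval_zero]
    exact congrArg M.init (agree s (by simp [T.upTo_zero hs]))
  · rw [T.upTo_succ] at agree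
    rw [M.eval_succ (T.relabel β) hsi, M.eval_succ (T.relabel γ) hsi,
      left fun t ht => agree t (.inl ht), T.childCount_relabel, T.childCount_relabel,
      last fun t ht => agree t (.inr ht)]

theorem range_eval_guess_succ {A G : Type} (f : A → G → B) (T : UTree A) {s : Node} {i : ℕ}
    (hsi : s ++ [i] ∈ T.dom) :
    let value (m : Node → G) := M.eval (T.relabel fun t => f (T.label t) (m t))
    (Set.range fun m => value m s (i + 1)) =
      Set.image2 M.step (Set.range fun m => value m s i)
        (Set.range fun m => value m (s ++ [i]) (T.childCount (s ++ [i]))) := by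
  classical
  intro value
  have hi : i ≤ T.childCount s := ((T.mem_dom_iff_lt_childCount s i).1 hsi).le
  have value_succ (m : Node → G) : value m s (i + 1) =
      M.step (value m s i) (value m (s ++ [i]) (T.childCount (s ++ [i]))) :=
    M.eval_succ (T.relabel _) hsi
  apply Set.Subset.antisymm
  · rintro _ ⟨m, rfl⟩
    exact ⟨_, ⟨m, rfl⟩, _, ⟨m, rfl⟩, (value_succ m).symm⟩
  · rintro _ ⟨_, ⟨m₁, rfl⟩, _, ⟨m₂, rfl⟩, rfl⟩
    let glued : Node → G := fun t => if s ++ [i] <+: t then m₂ t else m₁ t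
    have left : value glued s i = value m₁ s i :=
      M.eval_relabel_congr T s (T.mem_dom_of_append hsi) i hi fun t ht => by
        have : ¬ s ++ [i] <+: t := fun h => T.notMem_upTo_of_prefix h ht
        simp only [glued, if_neg this]
    have last : value glued (s ++ [i]) (T.childCount (s ++ [i])) =
        value m₂ (s ++ [i]) (T.childCount (s ++ [i])) :=
      M.eval_relabel_congr T _ hsi _ le_rfl fun t ht => by
        simp only [glued, if_pos (T.mem_upTo_childCount_iff.1 ht).2]
    exact ⟨glued, (value_succ glued).trans (congrArg₂ M.step left last)⟩

end StepwiseAut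

/-- A property of nodes that a finite stepwise automaton decides from its state on the subtree. -/
def Recognizable {B : Type} (P : UTree B → Node → Prop) : Prop :=
  ∃ (Q : Type) (_ : Finite Q) (M : StepwiseAut B Q) (accept : Set Q),
    ∀ T, ∀ s ∈ T.dom, (P T s ↔ M.eval T s (T.childCount s) ∈ accept)

theorem exists_mem_iff_or_exists_ne {X : Type*} {S : Set X} {p : X → Prop} {a : X} (ha : a ∈ S) :
    (∃ x ∈ S, p x) ↔ p a ∨ ∃ x ∈ S, x ≠ a ∧ p x := by
  grind

theorem nontrivial_union_of_disjoint {X : Type*} {S S' : Set X} (h : Disjoint S S') :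
    (S ∪ S').Nontrivial ↔ S.Nontrivial ∨ S'.Nontrivial ∨ S.Nonempty ∧ S'.Nonempty := by
  constructor
  · rintro ⟨x, hx | hx, y, hy | hy, hxy⟩
    · exact .inl ⟨x, hx, y, hy, hxy⟩
    · exact .inr (.inr ⟨⟨x, hx⟩, y, hy⟩)
    · exact .inr (.inr ⟨⟨y, hy⟩, x, hx⟩)
    · exact .inr (.inl ⟨x, hx, y, hy, hxy⟩)
  · rintro (hS | hS' | ⟨⟨x, hx⟩, y, hy⟩)
    · exact hS.mono Set.subset_union_left
    · exact hS'.mono Set.subset_union_right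
    · exact ⟨x, .inl hx, y, .inr hy, h.ne_of_mem hx hy⟩

namespace Recognizable

variable {B : Type} {P P' : UTree B → Node → Prop}

theorem of_stepwise {Q : Type} [Finite Q] (M : StepwiseAut B Q) (f : UTree B → Node → ℕ → Q)
    (zero : ∀ T, ∀ s ∈ T.dom, f T s 0 = M.init (T.label s))
    (succ : ∀ T s i, s ++ [i] ∈ T.dom →
      f T s (i + 1) = M.step (f T s i) (f T (s ++ [i]) (T.childCount (s ++ [i]))))
    (accept : Set Q) (hP : ∀ T, ∀ s ∈ T.dom, (P T s ↔ f T s (T.childCount s) ∈ accept)) :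
    Recognizable P :=
  ⟨Q, ‹_›, M, accept, fun T s hs => by
    rw [hP T s hs, M.eval_unique T (zero T) (succ T) s hs _ le_rfl]⟩

theorem congr (hP : Recognizable P) (h : ∀ T, ∀ s ∈ T.dom, (P' T s ↔ P T s)) :
    Recognizable P' := by
  obtain ⟨Q, hQ, M, accept, hM⟩ := hP
  exact ⟨Q, hQ, M, accept, fun T s hs => (h T s hs).trans (hM T s hs)⟩

theorem label (p : B → Prop) : Recognizable fun (T : UTree B) s => p (T.label s) :=
  of_stepwise ⟨p, fun x _ => x⟩ (fun T s _ => p (T.label s)) (fun _ _ _ => rfl)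
    (fun _ _ _ _ => rfl) {q | q} fun _ _ _ => Iff.rfl

theorem relabel_congr (hP : Recognizable P) {A : Type} (T : UTree A) {s : Node} (hs : s ∈ T.dom)
    {β γ : Node → B} (h : ∀ t ∈ T.dom, s <+: t → β t = γ t) :
    P (T.relabel β) s ↔ P (T.relabel γ) s := by
  obtain ⟨Q, _, M, accept, hM⟩ := hP
  rw [hM (T.relabel β) s hs, hM (T.relabel γ) s hs, T.childCount_relabel, T.childCount_relabel,
    M.eval_relabel_congr T s hs _ le_rfl fun t ht => (T.mem_upTo_childCount_iff.1 ht).elim (h t)]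

theorem not (hP : Recognizable P) : Recognizable fun T s => ¬ P T s := by
  obtain ⟨Q, hQ, M, accept, hM⟩ := hP
  exact ⟨Q, hQ, M, acceptᶜ, fun T s hs => not_congr (hM T s hs)⟩

theorem and (hP : Recognizable P) (hP' : Recognizable P') :
    Recognizable fun T s => P T s ∧ P' T s := by
  obtain ⟨Q, _, M, accept, hM⟩ := hP
  obtain ⟨Q', _, M', accept', hM'⟩ := hP'
  exact of_stepwise
    ⟨fun b => (M.init b, M'.init b), fun x y => (M.step x.1 y.1, M'.step x.2 y.2)⟩
    (fun T s i => (M.eval T s i, M'.eval T s i))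
    (fun T s _ => by rw [M.eval_zero, M'.eval_zero])
    (fun T s i h => by rw [M.eval_succ T h, M'.eval_succ T h])
    {q | q.1 ∈ accept ∧ q.2 ∈ accept'} fun T s hs => and_congr (hM T s hs) (hM' T s hs)

theorem exists_descendant (hP : Recognizable P) :
    Recognizable fun T s => ∃ t ∈ T.dom, s <+: t ∧ P T t := by
  obtain ⟨Q, _, M, accept, hM⟩ := hP
  refine of_stepwise
    ⟨fun b => (M.init b, False), fun x y => (M.step x.1 y.1, x.2 ∨ y.1 ∈ accept ∨ y.2)⟩
    (fun T s i => (M.eval T s i, ∃ t ∈ T.upTo s i, t ≠ s ∧ P T t))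
    (fun T s hs => by simp [M.eval_zero, T.upTo_zero hs]) (fun T s i hsi => ?_)
    {q | q.1 ∈ accept ∨ q.2} fun T s hs => ?_
  · have root : s ++ [i] ∈ T.upTo (s ++ [i]) (T.childCount (s ++ [i])) :=
      T.mem_upTo_childCount_iff.2 ⟨hsi, List.prefix_rfl⟩
    have ne : ∀ t ∈ T.upTo (s ++ [i]) (T.childCount (s ++ [i])), t ≠ s := by
      rintro t ht rfl
      simpa using (T.mem_upTo_childCount_iff.1 ht).2.length_le
    have below : (∃ t ∈ T.upTo (s ++ [i]) (T.childCount (s ++ [i])), t ≠ s ∧ P T t) ↔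
        P T (s ++ [i]) ∨
          ∃ t ∈ T.upTo (s ++ [i]) (T.childCount (s ++ [i])), t ≠ s ++ [i] ∧ P T t := by
      rw [← exists_mem_iff_or_exists_ne root]
      exact exists_congr fun t => and_congr_right fun ht => and_iff_right (ne t ht)
    rw [M.eval_succ T hsi, T.upTo_succ]
    simp only [Set.mem_union, or_and_right, exists_or, below, hM T _ hsi]
  · have root : s ∈ T.upTo s (T.childCount s) :=
      T.mem_upTo_childCount_iff.2 ⟨hs, List.prefix_rfl⟩
    rw [Set.mem_ofPred_eq, ← hM T s hs, ← exists_mem_iff_or_exists_ne root]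
    simp only [T.mem_upTo_childCount_iff, and_assoc]

theorem exists_children_le (p q : B → Prop) : Recognizable fun (T : UTree B) s =>
    ∃ k, s ++ [k] ∈ T.dom ∧ (∃ j ≤ k, p (T.label (s ++ [j]))) ∧ q (T.label (s ++ [k])) := by
  refine of_stepwise
    ⟨fun b => (p b, q b, False, False), fun x y =>
      (x.1, x.2.1, x.2.2.1 ∨ y.1, x.2.2.2 ∨ (x.2.2.1 ∨ y.1) ∧ y.2.1)⟩
    (fun T s i => (p (T.label s), q (T.label s), ∃ j < i, p (T.label (s ++ [j])),
      ∃ k < i, (∃ j < k + 1, p (T.label (s ++ [j]))) ∧ q (T.label (s ++ [k]))))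
    (fun T s _ => by simp) (fun T s i _ => by simp only [Nat.exists_lt_succ_right])
    {x | x.2.2.2} fun T s _ => ?_
  simp only [T.mem_dom_iff_lt_childCount, Set.mem_ofPred_eq, Nat.lt_succ_iff]

theorem exists_singleton (p : B → Prop) : Recognizable fun (T : UTree B) s =>
    ∃ u, {t | (t ∈ T.dom ∧ s <+: t) ∧ p (T.label t)} = {u} := by
  let marked (T : UTree B) (s : Node) (i : ℕ) : Set Node := {t | t ∈ T.upTo s i ∧ p (T.label t)}
  have marked_succ (T : UTree B) (s : Node) (i : ℕ) : marked T s (i + 1) =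
      marked T s i ∪ marked T (s ++ [i]) (T.childCount (s ++ [i])) := by
    ext t
    simp only [marked, T.upTo_succ, Set.mem_union, Set.mem_ofPred_eq, or_and_right]
  have marked_disjoint (T : UTree B) (s : Node) (i : ℕ) :
      Disjoint (marked T s i) (marked T (s ++ [i]) (T.childCount (s ++ [i]))) :=
    (T.disjoint_upTo s i).mono (fun _ h => h.1) fun _ h => h.1
  refine of_stepwise
    ⟨fun b => (p b, False), fun x y => (x.1 ∨ y.1, x.2 ∨ y.2 ∨ x.1 ∧ y.1)⟩
    (fun T s i => ((marked T s i).Nonempty, (marked T s i).Nontrivial))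
    (fun T s hs => ?_) (fun T s i _ => ?_) {q | q.1 ∧ ¬ q.2} fun T s _ => ?_
  · have subsingleton : (marked T s 0).Subsingleton :=
      Set.subsingleton_singleton.anti fun t ht => T.upTo_zero hs ▸ ht.1
    ext
    · simp [marked, T.upTo_zero hs, Set.Nonempty]
    · simpa using subsingleton
  · rw [marked_succ, Set.union_nonempty, nontrivial_union_of_disjoint (marked_disjoint T s i)]
  · simp only [← T.mem_upTo_childCount_iff, Set.mem_ofPred_eq, Set.not_nontrivial_iff]
    exact Set.exists_eq_singleton_iff_nonempty_subsingleton

theorem exists_guess {A G : Type} (f : A → G → B) (hP : Recognizable P) :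
    Recognizable fun (T : UTree A) s =>
      ∃ m : Node → G, P (T.relabel fun t => f (T.label t) (m t)) s := by
  obtain ⟨Q, _, M, accept, hM⟩ := hP
  let value (T : UTree A) (m : Node → G) := M.eval (T.relabel fun t => f (T.label t) (m t))
  refine of_stepwise ⟨fun a => Set.range fun g => M.init (f a g), Set.image2 M.step⟩
    (fun T s i => Set.range fun m => value T m s i) (fun T s _ => ?_)
    (fun T s i hsi => M.range_eval_guess_succ f T hsi) {X | (X ∩ accept).Nonempty} fun T s hs => ?_
  · have single (m : Node → G) : value T m s 0 = M.init (f (T.label s) (m s)) := M.eval_zero _ s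
    have onto : Function.Surjective fun m : Node → G => m s := fun g => ⟨fun _ => g, rfl⟩
    simp only [single]
    exact onto.range_comp fun g => M.init (f (T.label s) g)
  · calc (∃ m : Node → G, P (T.relabel fun t => f (T.label t) (m t)) s)
      _ ↔ ∃ m, value T m s (T.childCount s) ∈ accept := exists_congr fun m => hM _ s hs
      _ ↔ _ := Set.exists_range_iff.symm

theorem comap {A : Type} (g : A → B) (hP : Recognizable P) :
    Recognizable fun (T : UTree A) s => P (T.relabel fun t => g (T.label t)) s :=
  (hP.exists_guess fun a (_ : Unit) => g a).congr fun _ _ _ => (exists_const _).symm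

theorem guess_and_singleton_iff {A : Type} (f : A → Prop → B) (hP : Recognizable P) (T : UTree A)
    {s : Node} (hs : s ∈ T.dom) (m : Node → Prop) :
    (P (T.relabel fun t => f (T.label t) (m t)) s ∧
        ∃ u, {t | (t ∈ T.dom ∧ s <+: t) ∧ m t} = {u}) ↔
      ∃ u, {t | (t ∈ T.dom ∧ s <+: t) ∧ m t} = {u} ∧
        P (T.relabel fun t => f (T.label t) (t = u)) s := by
  rw [← exists_and_left]
  refine exists_congr fun u => and_comm.trans (and_congr_right fun h => ?_)
  refine hP.relabel_congr T hs fun t ht hst => congrArg (f (T.label t)) (propext ?_)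
  simpa [ht, hst] using Set.ext_iff.1 h t

theorem guess_and_singleton {A : Type} (f : A → Prop → B) (hP : Recognizable P) :
    Recognizable fun (T : UTree (A × Prop)) s =>
      P (T.relabel fun t => f (T.label t).1 (T.label t).2) s ∧
        ∃ u, {t | (t ∈ T.dom ∧ s <+: t) ∧ (T.label t).2} = {u} :=
  (hP.comap fun a : A × Prop => f a.1 a.2).and (exists_singleton Prod.snd)

theorem exists_node {A : Type} (f : A → Prop → B) (hP : Recognizable P) :
    Recognizable fun (T : UTree A) s =>
      ∃ u ∈ T.dom, s <+: u ∧ P (T.relabel fun t => f (T.label t) (t = u)) s := by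
  refine ((hP.guess_and_singleton f).exists_guess Prod.mk).congr fun T s hs => ?_
  refine Iff.trans ?_ (exists_congr fun m => hP.guess_and_singleton_iff f T hs m).symm
  constructor
  · rintro ⟨u, hu, hsu, h⟩
    refine ⟨(· = u), u, Set.ext fun t => and_iff_right_of_imp ?_, h⟩
    rintro rfl
    exact ⟨hu, hsu⟩
  · rintro ⟨m, u, hm, h⟩
    obtain ⟨⟨hu, hsu⟩, -⟩ : u ∈ {t | (t ∈ T.dom ∧ s <+: t) ∧ m t} := hm ▸ rfl
    exact ⟨u, hu, hsu, h⟩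

end Recognizable

/-! ### Formulas to recognizable properties -/

/-- A letter together with the variables whose value the node is (first order) or belongs to
(second order). Recording all variables makes this infinite alphabet the same for all formulas. -/
@[ext]
structure VarLabel (A : Type) where
  letter : A
  fo : ℕ → Prop
  so : ℕ → Prop

/-- The tree `T` with a valuation written into its labels. -/
def UTree.annotate {A : Type} (T : UTree A) (v : ℕ → Node) (V : ℕ → Set Node) :
    UTree (VarLabel A) :=
  T.relabel fun t => ⟨T.label t, fun x => t = v x, fun X => t ∈ V X⟩

namespace VarLabel

variable {A : Type}

/-- Declare that the node is, or is not, the value of the first-order variable `n`. -/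
def setFO (n : ℕ) (b : VarLabel A) (m : Prop) : VarLabel A :=
  { b with fo := Function.update b.fo n m }

/-- Declare that the node belongs, or does not belong, to the value of the set variable `n`. -/
def setSO (n : ℕ) (b : VarLabel A) (m : Prop) : VarLabel A :=
  { b with so := Function.update b.so n m }

end VarLabel

namespace MSO

variable {A : Type}

theorem annotate_update_fo (T : UTree A) (v : ℕ → Node) (V : ℕ → Set Node) (n : ℕ) (u : Node) :
    T.annotate (Function.update v n u) V =
      T.relabel fun t => ((T.annotate v V).label t).setFO n (t = u) := by
  refine congrArg T.relabel (funext fun t => VarLabel.ext rfl (funext fun x => ?_) rfl)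
  obtain rfl | h := eq_or_ne x n <;> simp [UTree.annotate, UTree.relabel, VarLabel.setFO, *]

theorem annotate_update_so (T : UTree A) (v : ℕ → Node) (V : ℕ → Set Node) (n : ℕ) (S : Set Node) :
    T.annotate v (Function.update V n S) =
      T.relabel fun t => ((T.annotate v V).label t).setSO n (t ∈ S) := by
  refine congrArg T.relabel (funext fun t => VarLabel.ext rfl rfl (funext fun X => ?_))
  obtain rfl | h := eq_or_ne X n <;> simp [UTree.annotate, UTree.relabel, VarLabel.setSO, *]

/-- `φ` is expressed by the recognizable property `P` of the root of annotated trees. -/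
def Recognizes (P : UTree (VarLabel A) → Node → Prop) (φ : MSO A) : Prop :=
  Recognizable P ∧ ∀ T v V, (∀ x, v x ∈ T.dom) → (φ.Sat T v V ↔ P (T.annotate v V) [])

namespace Recognizes

variable {P P' : UTree (VarLabel A) → Node → Prop} {φ ψ : MSO A}

theorem eq (x y : ℕ) : Recognizes
    (fun T s => ∃ t ∈ T.dom, s <+: t ∧ (T.label t).fo x ∧ (T.label t).fo y)
    (.eq x y : MSO A) :=
  ⟨(Recognizable.label fun b : VarLabel A => b.fo x ∧ b.fo y).exists_descendant, fun _ v _ hv =>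
    ⟨fun h => ⟨v x, hv x, List.nil_prefix, rfl, h⟩, fun ⟨_, _, _, hx, hy⟩ => hx.symm.trans hy⟩⟩

theorem desc (x y : ℕ) : Recognizes
    (fun T s => ∃ t ∈ T.dom, s <+: t ∧ (T.label t).fo x ∧
      ∃ u ∈ T.dom, t <+: u ∧ (T.label u).fo y)
    (.desc x y : MSO A) := by
  have first := Recognizable.label fun b : VarLabel A => b.fo x
  have second := (Recognizable.label fun b : VarLabel A => b.fo y).exists_descendant
  refine ⟨(first.and second).exists_descendant, fun T v V hv => ?_⟩
  constructor
  · rintro ⟨-, -, h⟩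
    exact ⟨v x, hv x, List.nil_prefix, rfl, v y, hv y, h, rfl⟩
  · rintro ⟨_, ht, -, rfl, _, hu, h, rfl⟩
    exact ⟨ht, hu, h⟩

theorem sib (x y : ℕ) : Recognizes
    (fun T s => ∃ t ∈ T.dom, s <+: t ∧ ∃ k, t ++ [k] ∈ T.dom ∧
      (∃ j ≤ k, (T.label (t ++ [j])).fo x) ∧ (T.label (t ++ [k])).fo y)
    (.sib x y : MSO A) := by
  have siblings := Recognizable.exists_children_le (VarLabel.fo (A := A) · x) (VarLabel.fo · y)
  refine ⟨siblings.exists_descendant, fun T v V hv => ?_⟩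
  constructor
  · rintro ⟨-, -, t, j, k, hx, hy, hjk⟩
    have hk : t ++ [k] ∈ T.dom := hy ▸ hv y
    exact ⟨t, T.mem_dom_of_append hk, List.nil_prefix, k, hk, ⟨j, hjk, hx.symm⟩, hy.symm⟩
  · rintro ⟨t, -, -, k, -, ⟨j, hjk, hx⟩, hy⟩
    exact ⟨hv x, hv y, t, j, k, hx.symm, hy.symm, hjk⟩

theorem lab (a : A) (x : ℕ) : Recognizes
    (fun T s => ∃ t ∈ T.dom, s <+: t ∧ (T.label t).fo x ∧ (T.label t).letter = a)
    (.lab a x) := by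
  refine ⟨(Recognizable.label fun b : VarLabel A => b.fo x ∧ b.letter = a).exists_descendant,
    fun T v V hv => ?_⟩
  constructor
  · rintro ⟨-, h⟩
    exact ⟨v x, hv x, List.nil_prefix, rfl, h⟩
  · rintro ⟨_, ht, -, rfl, h⟩
    exact ⟨ht, h⟩

theorem mem (X x : ℕ) : Recognizes
    (fun T s => ∃ t ∈ T.dom, s <+: t ∧ (T.label t).fo x ∧ (T.label t).so X)
    (.mem X x : MSO A) := by
  refine ⟨(Recognizable.label fun b : VarLabel A => b.fo x ∧ b.so X).exists_descendant,
    fun T v V hv => ?_⟩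
  constructor
  · intro h
    exact ⟨v x, hv x, List.nil_prefix, rfl, h⟩
  · rintro ⟨_, -, -, rfl, h⟩
    exact h

theorem not (h : Recognizes P φ) : Recognizes (fun T s => ¬ P T s) φ.not :=
  ⟨h.1.not, fun T v V hv => not_congr (h.2 T v V hv)⟩

theorem and (h : Recognizes P φ) (h' : Recognizes P' ψ) :
    Recognizes (fun T s => P T s ∧ P' T s) (φ.and ψ) :=
  ⟨h.1.and h'.1, fun T v V hv => and_congr (h.2 T v V hv) (h'.2 T v V hv)⟩

theorem exFO (n : ℕ) (h : Recognizes P φ) : Recognizes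
    (fun T s => ∃ u ∈ T.dom, s <+: u ∧ P (T.relabel fun t => (T.label t).setFO n (t = u)) s)
    (φ.exFO n) := by
  refine ⟨h.1.exists_node (VarLabel.setFO n), fun T v V hv => exists_congr fun u =>
    and_congr_right fun hu => ?_⟩
  have hvu (x : ℕ) : Function.update v n u x ∈ T.dom := by
    obtain rfl | hx := eq_or_ne x n <;> simp [*]
  rw [and_iff_right List.nil_prefix, h.2 T _ V hvu, annotate_update_fo]
  rfl

theorem exSO (n : ℕ) (h : Recognizes P φ) : Recognizes
    (fun T s => ∃ m : Node → Prop, P (T.relabel fun t => (T.label t).setSO n (m t)) s)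
    (φ.exSO n) := by
  refine ⟨h.1.exists_guess (VarLabel.setSO n), fun T v V hv => ?_⟩
  have sat_iff (S : Set Node) : φ.Sat T v (Function.update V n S) ↔
      P (T.relabel fun t => ((T.annotate v V).label t).setSO n (t ∈ S)) [] := by
    rw [h.2 T v _ hv, annotate_update_so]
  constructor
  · rintro ⟨S, -, hS⟩
    exact ⟨(· ∈ S), (sat_iff S).1 hS⟩
  · rintro ⟨m, hm⟩
    refine ⟨{t | t ∈ T.dom ∧ m t}, fun t ht => ht.1, (sat_iff _).2 ?_⟩
    refine (h.1.relabel_congr T T.nil_mem fun t ht _ => ?_).1 hm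
    simp [ht, UTree.annotate, UTree.relabel]

end Recognizes

theorem exists_recognizes (φ : MSO A) : ∃ P, Recognizes P φ := by
  induction φ with
  | eq x y => exact ⟨_, .eq x y⟩
  | desc x y => exact ⟨_, .desc x y⟩
  | sib x y => exact ⟨_, .sib x y⟩
  | lab a x => exact ⟨_, .lab a x⟩
  | mem X x => exact ⟨_, .mem X x⟩
  | not φ ih => exact ih.imp' _ fun _ h => h.not
  | and φ ψ ihφ ihψ =>
    obtain ⟨⟨P, hP⟩, P', hP'⟩ := And.intro ihφ ihψ
    exact ⟨_, hP.and hP'⟩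
  | exFO n φ ih => exact ih.imp' _ fun _ h => h.exFO n
  | exSO n φ ih => exact ih.imp' _ fun _ h => h.exSO n

end MSO

/-! ### Recognizable properties to query automata -/

/-- The value of a left fold of `f` over the labels `ρ` of the first `i` children of `s`. -/
def siblingFold {H X : Type} (f : H → X → H) (h : H) (ρ : Node → X) (s : Node) : ℕ → H
  | 0 => h
  | i + 1 => f (siblingFold f h ρ s i) (ρ (s ++ [i]))

theorem UTree.foldl_childrenList {A H X : Type} (T : UTree A) (f : H → X → H) (h : H)
    (ρ : Node → X) (s : Node) :
    ((T.childrenList s).map ρ).foldl f h = siblingFold f h ρ s (T.childCount s) := by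
  rw [childrenList]
  induction T.childCount s with
  | zero => rfl
  | succ i ih => simp [List.range_succ, siblingFold, ← ih]

namespace StepwiseAut

variable {A G Q : Type} (M : StepwiseAut (A × G) Q)

/-- The words of pairs (state of a child, guess at the child) that take the state of a node labelled
`b` to `q`. -/
def childWords (b : A × G) (q : Q) : Language (Q × G) :=
  {w | w.foldl (fun x y => M.step x y.1) (M.init b) = q}

theorem isRegular_childWords [Finite Q] (b : A × G) (q : Q) : (M.childWords b q).IsRegular :=
  Language.isRegular_iff.2 ⟨Q, Fintype.ofFinite Q, ⟨fun x y => M.step x y.1, M.init b, {q}⟩, rfl⟩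

variable [Finite Q] [Finite G]

/-- The nondeterministic automaton that guesses a second label `g : G` at each node and runs `M` on
the resulting tree. A state consists of the state of `M` on the subtree and the guess. -/
noncomputable def guessing (accept : Set Q) : NUTA A where
  Q := Q × G
  fintype_Q := Fintype.ofFinite _
  F := {p | p.1 ∈ accept}
  δ p a := (IsRational.of_isRegular (M.isRegular_childWords (a, p.2) p.1)).choose

theorem mem_matches_guessing_iff (accept : Set Q) (p : Q × G) (a : A) (w : List (Q × G)) :
    w ∈ ((M.guessing accept).δ p a).matches' ↔
      w.foldl (fun x y => M.step x y.1) (M.init (a, p.2)) = p.1 :=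
  Set.ext_iff.1 (IsRational.of_isRegular (M.isRegular_childWords (a, p.2) p.1)).choose_spec w

theorem isRun_guessing_iff (accept : Set Q) (T : UTree A) (ρ : Node → Q × G) :
    (M.guessing accept).IsRun T ρ ↔ ∀ s ∈ T.dom,
      (ρ s).1 = M.eval (T.relabel fun t => (T.label t, (ρ t).2)) s (T.childCount s) := by
  let T' := T.relabel fun t => (T.label t, (ρ t).2)
  let value (s : Node) : ℕ → Q :=
    siblingFold (fun x y => M.step x y.1) (M.init (T.label s, (ρ s).2)) ρ s
  have run_iff : (M.guessing accept).IsRun T ρ ↔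
      ∀ s ∈ T.dom, value s (T.childCount s) = (ρ s).1 := by
    refine forall₂_congr fun s _ => (M.mem_matches_guessing_iff accept _ _ _).trans ?_
    exact iff_of_eq (congrArg (· = (ρ s).1) (T.foldl_childrenList _ _ ρ s))
  rw [run_iff]
  constructor
  · intro run s hs
    have value_eq := M.eval_unique T' (f := value) (fun _ _ => rfl)
      (fun s i hsi => congrArg (M.step (value s i)) (run _ hsi).symm) s hs
    exact (run s hs).symm.trans (value_eq _ le_rfl).symm
  · intro h s hs
    rw [h s hs]
    refine T.subtree_induction (motive := fun s i => value s i = M.eval T' s i)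
      (fun s _ => (M.eval_zero T' s).symm) (fun s i hsi left _ => ?_) s hs _ le_rfl
    rw [M.eval_succ T' hsi, ← left]
    exact congrArg (M.step (value s i)) (h _ hsi)

end StepwiseAut

theorem Recognizable.exists_qaut {A G : Type} [Finite G] {P : UTree (A × G) → Node → Prop}
    (hP : Recognizable P) (S : Set G) :
    ∃ QA : QAut A, ∀ T s, s ∈ QA.existsSem T ↔
      s ∈ T.dom ∧ ∃ m : Node → G, P (T.relabel fun t => (T.label t, m t)) [] ∧ m s ∈ S := by
  obtain ⟨Q, _, M, accept, hM⟩ := hP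
  let guess (T : UTree A) (m : Node → G) : UTree (A × G) := T.relabel fun t => (T.label t, m t)
  refine ⟨⟨M.guessing accept, {p | p.1.2 ∈ S}⟩, fun T s => and_congr_right fun _ => ?_⟩
  constructor
  · rintro ⟨ρ, run, final, hS⟩
    have root := (M.isRun_guessing_iff accept T ρ).1 run [] T.nil_mem
    exact ⟨fun t => (ρ t).2, (hM _ [] T.nil_mem).2 (Set.mem_of_eq_of_mem root.symm final), hS⟩
  · rintro ⟨m, hm, hS⟩
    refine ⟨fun t => (M.eval (guess T m) t (T.childCount t), m t), ?_,
      (hM (guess T m) [] T.nil_mem).1 hm, hS⟩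
    exact (M.isRun_guessing_iff accept T _).2 fun _ _ => rfl

theorem Recognizable.exists_qaut_marked {A B : Type} (f : A → Prop → B)
    {P : UTree B → Node → Prop} (hP : Recognizable P) :
    ∃ QA : QAut A, ∀ T s, s ∈ QA.existsSem T ↔
      s ∈ T.dom ∧ P (T.relabel fun t => f (T.label t) (t = s)) [] := by
  obtain ⟨QA, hQA⟩ := (hP.guess_and_singleton f).exists_qaut {m | m}
  refine ⟨QA, fun T s => (hQA T s).trans (and_congr_right fun hs => ?_)⟩
  have root_iff (m : Node → Prop) := hP.guess_and_singleton_iff f T T.nil_mem m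
  constructor
  · rintro ⟨m, hm, hms⟩
    obtain ⟨u, hu, h⟩ := (root_iff m).1 hm
    obtain rfl : s = u := (Set.ext_iff.1 hu s).1 ⟨⟨hs, List.nil_prefix⟩, hms⟩
    exact h
  · intro h
    refine ⟨(· = s), (root_iff _).2 ⟨s, Set.ext fun t => and_iff_right_of_imp ?_, h⟩, rfl⟩
    rintro rfl
    exact ⟨hs, List.nil_prefix⟩

theorem MSO.DefinesU.exists_qaut {A : Type} {φ : MSO A} {Q : UTree A → Set Node}
    (hφ : φ.DefinesU Q) (hQ : ∀ T, Q T ⊆ ↑T.dom) :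
    ∃ QA : QAut A, ∀ T, Q T = QA.existsSem T := by
  obtain ⟨P, hP, sat_iff⟩ := φ.exists_recognizes
  obtain ⟨QA, hQA⟩ := hP.exists_qaut_marked fun a m => ⟨a, fun _ => m, fun _ => False⟩
  refine ⟨QA, fun T => Set.ext fun s => ?_⟩
  rw [hQA, ← and_iff_right_of_imp (@hQ T s)]
  refine and_congr_right fun hs => ?_
  rw [hφ T (fun _ => s) (fun _ => ∅) s hs, Function.update_eq_self 0 fun _ => s,
    sat_iff T _ _ fun _ => hs]
  rfl

/-! ### Runs of unranked tree automata, locally -/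

namespace UTree

variable {A : Type}

/-- `t` covers `s` in the reflexive relation `r` on the nodes of `T`. -/
def Covers (T : UTree A) (r : Node → Node → Prop) (s t : Node) : Prop :=
  r s t ∧ s ≠ t ∧ ∀ u ∈ T.dom, r s u → r u t → u = s ∨ u = t

theorem childR_iff_covers (T : UTree A) (s t : Node) : T.childR s t ↔ T.Covers T.descR s t := by
  constructor
  · rintro ⟨hs, ht, i, rfl⟩
    refine ⟨⟨hs, ht, List.prefix_append _ _⟩, by simp, ?_⟩
    rintro _ hu ⟨-, -, _ | ⟨j, w⟩, rfl⟩ ⟨-, -, hut⟩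
    · exact .inl s.append_nil
    · rw [List.prefix_append_right_inj] at hut
      exact .inr (congrArg (s ++ ·) (hut.eq_of_length (le_antisymm hut.length_le (by simp))))
  · rintro ⟨⟨hs, ht, hst⟩, hne, between⟩
    obtain rfl | ⟨i, hi⟩ := prefix_iff_eq_or_exists_child.1 hst
    · exact absurd rfl hne
    · have hsi := T.prefix_closed ht hi
      obtain h | h := between _ hsi ⟨hs, hsi, List.prefix_append _ _⟩ ⟨hsi, ht, hi⟩
      · simp at h
      · exact ⟨hs, ht, i, h.symm⟩

theorem nsR_iff_covers (T : UTree A) (s t : Node) : T.nsR s t ↔ T.Covers T.sibR s t := by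
  constructor
  · rintro ⟨hs, ht, u, i, rfl, rfl⟩
    refine ⟨⟨hs, ht, u, i, i + 1, rfl, rfl, i.le_succ⟩, by simp, ?_⟩
    rintro _ - ⟨-, -, u₁, i₁, k, h₁, rfl, hik⟩ ⟨-, -, u₂, k₂, j₂, h₂, h₃, hkj⟩
    obtain ⟨rfl, rfl⟩ := List.append_singleton_inj.1 h₁
    obtain ⟨rfl, rfl⟩ := List.append_singleton_inj.1 h₂
    obtain ⟨-, rfl⟩ := List.append_singleton_inj.1 h₃
    obtain rfl | rfl : k = i ∨ k = i + 1 := by omega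
    · exact .inl rfl
    · exact .inr rfl
  · rintro ⟨⟨hs, ht, u, i, j, rfl, rfl, hij⟩, hne, between⟩
    have hlt : i < j := hij.lt_of_ne fun h => hne (h ▸ rfl)
    have hnext : u ++ [i + 1] ∈ T.dom := by
      rw [mem_dom_iff_lt_childCount] at ht ⊢
      exact lt_of_le_of_lt hlt ht
    obtain h | h := between _ hnext ⟨hs, hnext, u, i, i + 1, rfl, rfl, i.le_succ⟩
      ⟨hnext, ht, u, i + 1, j, rfl, rfl, hlt⟩
    · simp at h
    · exact ⟨hs, ht, u, i, rfl, h.symm⟩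

theorem childCount_eq_zero_iff (T : UTree A) {s : Node} (hs : s ∈ T.dom) :
    T.childCount s = 0 ↔ ∀ t ∈ T.dom, ¬ T.childR s t := by
  constructor
  · rintro h _ ht ⟨-, -, i, rfl⟩
    rw [mem_dom_iff_lt_childCount, h] at ht
    exact i.not_lt_zero ht
  · intro h
    by_contra hn
    have h₀ := (T.mem_dom_iff_lt_childCount s 0).2 (Nat.pos_of_ne_zero hn)
    exact h _ h₀ ⟨hs, h₀, 0, rfl⟩

theorem childCount_eq_add_one_iff (T : UTree A) {s : Node} {i : ℕ} (hi : s ++ [i] ∈ T.dom) :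
    T.childCount s = i + 1 ↔ ∀ t ∈ T.dom, ¬ T.nsR (s ++ [i]) t := by
  have hlt := (T.mem_dom_iff_lt_childCount s i).1 hi
  constructor
  · rintro h _ ht ⟨-, -, u, j, hj, rfl⟩
    obtain ⟨rfl, rfl⟩ := List.append_singleton_inj.1 hj
    rw [mem_dom_iff_lt_childCount, h] at ht
    exact ht.ne rfl
  · intro h
    by_contra hne
    have hnext := (T.mem_dom_iff_lt_childCount s (i + 1)).2 (lt_of_le_of_ne' hlt hne)
    exact h _ hnext ⟨hi, hnext, s, i, rfl, rfl⟩

theorem eq_zero_iff_not_nsR (T : UTree A) {s : Node} {i : ℕ} (hi : s ++ [i] ∈ T.dom) :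
    i = 0 ↔ ∀ t ∈ T.dom, ¬ T.nsR t (s ++ [i]) := by
  constructor
  · rintro rfl t - ⟨-, -, u, j, -, hj⟩
    exact j.succ_ne_zero (List.append_singleton_inj.1 hj).2.symm
  · intro h
    by_contra hne
    obtain ⟨j, rfl⟩ := Nat.exists_eq_succ_of_ne_zero hne
    have hj := T.sib_closed hi j.lt_succ_self
    exact h _ hj ⟨hj, hi, s, j, rfl, rfl⟩

theorem eq_nil_of_not_childR (T : UTree A) {s : Node} (hs : s ∈ T.dom)
    (h : ∀ t ∈ T.dom, ¬ T.childR t s) : s = [] := by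
  obtain rfl | ⟨t, i, rfl⟩ := s.eq_nil_or_concat'
  · rfl
  · have ht := T.prefix_closed hs (List.prefix_append t [i])
    exact absurd ⟨ht, hs, i, rfl⟩ (h t ht)

end UTree

/-- The local conditions on a labelling `c` of the nodes which say that the first components form a
run of `N`. Here `step`, `start`, `accept` is one deterministic word automaton for all languages
`δ(q, a)`, and the second component of `c t` is its state before it reads `t`, that is, after the
left siblings of `t`. -/
structure NUTA.IsLocalRun {A H : Type} (N : NUTA A) (step : H → N.Q → H) (start : H)
    (accept : N.Q → A → Set H) (T : UTree A) (c : Node → N.Q × H) : Prop where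
  first : ∀ t ∈ T.dom, (∀ s ∈ T.dom, ¬ T.nsR s t) → (c t).2 = start
  next : ∀ s ∈ T.dom, ∀ t ∈ T.dom, T.nsR s t → (c t).2 = step (c s).2 (c s).1
  leaf : ∀ s ∈ T.dom, (∀ t ∈ T.dom, ¬ T.childR s t) → start ∈ accept (c s).1 (T.label s)
  last : ∀ s ∈ T.dom, ∀ t ∈ T.dom, (T.childR s t ∧ ∀ u ∈ T.dom, ¬ T.nsR t u) →
    step (c t).2 (c t).1 ∈ accept (c s).1 (T.label s)

namespace NUTA

variable {A H : Type} {N : NUTA A} {step : H → N.Q → H} {start : H} {accept : N.Q → A → Set H}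
  {T : UTree A}

theorem IsLocalRun.siblingFold_eq {c : Node → N.Q × H}
    (h : N.IsLocalRun step start accept T c) (s : Node) :
    ∀ i, s ++ [i] ∈ T.dom → siblingFold step start (fun t => (c t).1) s i = (c (s ++ [i])).2
  | 0, h₀ => (h.first _ h₀ ((T.eq_zero_iff_not_nsR h₀).1 rfl)).symm
  | i + 1, hi => by
    have hi' := T.sib_closed hi i.lt_succ_self
    rw [siblingFold, h.siblingFold_eq s i hi', h.next _ hi' _ hi ⟨hi', hi, s, i, rfl, rfl⟩]

theorem isRun_iff_exists_isLocalRun {ρ : Node → N.Q}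
    (hδ : ∀ q a w, w ∈ (N.δ q a).matches' ↔ w.foldl step start ∈ accept q a) :
    N.IsRun T ρ ↔
      ∃ d : Node → H, N.IsLocalRun step start accept T fun t => (ρ t, d t) := by
  have run_iff : N.IsRun T ρ ↔ ∀ s ∈ T.dom,
      siblingFold step start ρ s (T.childCount s) ∈ accept (ρ s) (T.label s) := by
    simp only [IsRun, hδ, T.foldl_childrenList]
  rw [run_iff]
  constructor
  · intro run
    refine ⟨fun t => siblingFold step start ρ t.dropLast (t.getLastD 0), ?_, ?_, ?_, ?_⟩
    · intro t ht h
      obtain rfl | ⟨s, i, rfl⟩ := t.eq_nil_or_concat'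
      · rfl
      · simp [(T.eq_zero_iff_not_nsR ht).2 h, siblingFold]
    · rintro _ - _ - ⟨-, -, u, i, rfl, rfl⟩
      simp [siblingFold]
    · intro s hs h
      simpa [(T.childCount_eq_zero_iff hs).2 h, siblingFold] using run s hs
    · rintro s hs _ ht ⟨⟨-, -, i, rfl⟩, h⟩
      simpa [(T.childCount_eq_add_one_iff ht).2 h, siblingFold] using run s hs
  · rintro ⟨d, h⟩ s hs
    rcases hn : T.childCount s with _ | n
    · exact h.leaf s hs ((T.childCount_eq_zero_iff hs).1 hn)
    · have ht : s ++ [n] ∈ T.dom := by simp [T.mem_dom_iff_lt_childCount, hn]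
      rw [siblingFold, h.siblingFold_eq s n ht]
      exact h.last s hs _ ht ⟨⟨hs, ht, n, rfl⟩, (T.childCount_eq_add_one_iff ht).1 hn⟩

end NUTA

theorem QAut.mem_existsSem_iff_exists_isLocalRun {A H : Type} (QA : QAut A) {step : H → QA.N.Q → H}
    {start : H} {accept : QA.N.Q → A → Set H} {T : UTree A} {s : Node} (hs : s ∈ T.dom)
    (hδ : ∀ q a w, w ∈ (QA.N.δ q a).matches' ↔ w.foldl step start ∈ accept q a) :
    s ∈ QA.existsSem T ↔ ∃ c : Node → QA.N.Q × H, QA.N.IsLocalRun step start accept T c ∧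
      (c []).1 ∈ QA.N.F ∧ ((c s).1, T.label s) ∈ QA.S := by
  simp only [existsSem, Set.mem_ofPred_eq, hs, true_and]
  constructor
  · rintro ⟨ρ, hρ, h⟩
    obtain ⟨d, hd⟩ := (NUTA.isRun_iff_exists_isLocalRun hδ).1 hρ
    exact ⟨fun t => (ρ t, d t), hd, h⟩
  · rintro ⟨c, hc, h⟩
    exact ⟨fun t => (c t).1, (NUTA.isRun_iff_exists_isLocalRun hδ).2 ⟨_, hc⟩, h⟩

/-! ### Query automata to formulas -/

namespace MSO

variable {A : Type}

theorem exists_sat_iff_exists_sets (φ : MSO A) (S : Finset ℕ) :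
    ∃ ψ : MSO A, ∀ T v V, ψ.Sat T v V ↔
      ∃ W : ℕ → Set Node, (∀ i ∈ S, W i ⊆ ↑T.dom) ∧ (∀ i ∉ S, W i = V i) ∧ φ.Sat T v W := by
  induction S using Finset.induction with
  | empty =>
    refine ⟨φ, fun T v V => ⟨fun h => ⟨V, by simp, fun _ _ => rfl, h⟩, ?_⟩⟩
    rintro ⟨W, -, hW, h⟩
    obtain rfl : W = V := funext fun i => hW i (Finset.notMem_empty i)
    exact h
  | insert n S hn ih =>
    obtain ⟨ψ, hψ⟩ := ih
    refine ⟨ψ.exSO n, fun T v V => ?_⟩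
    simp only [Sat, hψ, Finset.mem_insert, not_or, and_imp, forall_eq_or_imp]
    constructor
    · rintro ⟨X, hX, W, hsub, heq, h⟩
      have hWn : W n = X := (heq n hn).trans (Function.update_self n X V)
      refine ⟨W, ⟨hWn ▸ hX, hsub⟩, fun i hi hiS => ?_, h⟩
      rw [heq i hiS, Function.update_of_ne hi]
    · rintro ⟨W, ⟨hn, hsub⟩, heq, h⟩
      refine ⟨W n, hn, W, hsub, fun i hi => ?_, h⟩
      obtain rfl | hne := eq_or_ne i n
      · simp
      · rw [heq i hne hi, Function.update_of_ne hne]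

/-- The condition `P` on first-order values and on a labelling `c` of the nodes by sets is defined
by a formula, which finds out whether `r ∈ c t` by means of the set variable `e r`. -/
def Expressible {R : Type} (e : R → ℕ) (P : UTree A → (ℕ → Node) → (Node → Set R) → Prop) : Prop :=
  ∃ φ : MSO A, ∀ T v V c, (∀ t ∈ T.dom, ∀ r, t ∈ V (e r) ↔ r ∈ c t) → (φ.Sat T v V ↔ P T v c)

namespace Expressible

variable {R : Type} {e : R → ℕ} {P P' : UTree A → (ℕ → Node) → (Node → Set R) → Prop}

theorem congr (hP : Expressible e P) (h : ∀ T v c, P' T v c ↔ P T v c) : Expressible e P' := by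
  obtain rfl : P' = P := funext fun T => funext fun v => funext fun c => propext (h T v c)
  exact hP

theorem eq (x y : ℕ) : Expressible e fun (_ : UTree A) v _ => v x = v y :=
  ⟨.eq x y, fun _ _ _ _ _ => Iff.rfl⟩

theorem descR (x y : ℕ) : Expressible e fun (T : UTree A) v _ => T.descR (v x) (v y) :=
  ⟨.desc x y, fun _ _ _ _ _ => Iff.rfl⟩

theorem sibR (x y : ℕ) : Expressible e fun (T : UTree A) v _ => T.sibR (v x) (v y) :=
  ⟨.sib x y, fun _ _ _ _ _ => Iff.rfl⟩

theorem lab (a : A) (x : ℕ) :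
    Expressible e fun (T : UTree A) v _ => v x ∈ T.dom ∧ T.label (v x) = a :=
  ⟨.lab a x, fun _ _ _ _ _ => Iff.rfl⟩

theorem not (hP : Expressible e P) : Expressible e fun T v c => ¬ P T v c :=
  hP.imp' .not fun _ hφ T v V c hc => not_congr (hφ T v V c hc)

theorem and (hP : Expressible e P) (hP' : Expressible e P') :
    Expressible e fun T v c => P T v c ∧ P' T v c := by
  obtain ⟨φ, hφ⟩ := hP
  exact hP'.imp' φ.and fun _ hψ T v V c hc => and_congr (hφ T v V c hc) (hψ T v V c hc)

theorem or (hP : Expressible e P) (hP' : Expressible e P') :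
    Expressible e fun T v c => P T v c ∨ P' T v c :=
  (hP.not.and hP'.not).not.congr fun _ _ _ => or_iff_not_and_not

theorem imp (hP : Expressible e P) (hP' : Expressible e P') :
    Expressible e fun T v c => P T v c → P' T v c :=
  (hP.and hP'.not).not.congr fun _ _ _ => not_and_not_right.symm

theorem ex (n : ℕ) (hP : Expressible e P) :
    Expressible e fun T v c => ∃ s ∈ T.dom, P T (Function.update v n s) c :=
  hP.imp' (.exFO n) fun _ hφ T _ V c hc =>
    exists_congr fun _ => and_congr_right fun _ => hφ T _ V c hc

theorem all (n : ℕ) (hP : Expressible e P) :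
    Expressible e fun T v c => ∀ s ∈ T.dom, P T (Function.update v n s) c :=
  (hP.not.ex n).not.congr fun _ _ _ => by simp

theorem const (p : Prop) : Expressible e fun (_ : UTree A) _ _ => p := by
  by_cases hp : p
  · exact (eq 0 0).congr fun _ _ _ => by simp [hp]
  · exact (eq 0 0).not.congr fun _ _ _ => by simp [hp]

theorem forall_finite {ι : Type} [Finite ι]
    {P : ι → UTree A → (ℕ → Node) → (Node → Set R) → Prop} (hP : ∀ i, Expressible e (P i)) :
    Expressible e fun T v c => ∀ i, P i T v c := by
  classical
  have := Fintype.ofFinite ι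
  suffices ∀ S : Finset ι, Expressible e fun T v c => ∀ i ∈ S, P i T v c from
    (this Finset.univ).congr fun _ _ _ => by simp
  intro S
  induction S using Finset.induction with
  | empty => exact (const True).congr fun _ _ _ => by simp
  | insert i S _ ih => exact ((hP i).and ih).congr fun _ _ _ => Finset.forall_mem_insert ..

theorem mem (r : R) (x : ℕ) :
    Expressible e fun (T : UTree A) v c => v x ∈ T.dom → r ∈ c (v x) := by
  refine ⟨.not (.and (.desc x x) (.not (.mem (e r) x))), fun T v V c hc => ?_⟩
  have dom_iff : T.descR (v x) (v x) ↔ v x ∈ T.dom :=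
    ⟨fun h => h.1, fun h => ⟨h, h, List.prefix_rfl⟩⟩
  simp only [Sat, dom_iff, not_and_not_right]
  exact forall_congr' fun hx => hc _ hx r

theorem covers {Rel : UTree A → Node → Node → Prop}
    (h : ∀ x y, Expressible e fun T v _ => Rel T (v x) (v y)) (x y : ℕ) :
    Expressible e fun T v _ => T.Covers (Rel T) (v x) (v y) := by
  obtain ⟨z, hx, hy⟩ : ∃ z, x ≠ z ∧ y ≠ z := ⟨x + y + 1, by omega, by omega⟩
  have between := ((h x z).imp ((h z y).imp ((eq z x).or (eq z y)))).all z
  exact ((h x y).and ((eq x y).not.and between)).congr fun _ _ _ => by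
    simp only [UTree.Covers, ne_eq, Function.update_self, Function.update_of_ne hx,
      Function.update_of_ne hy]

theorem childR (x y : ℕ) : Expressible e fun (T : UTree A) v _ => T.childR (v x) (v y) :=
  (covers descR x y).congr fun T _ _ => T.childR_iff_covers ..

theorem nsR (x y : ℕ) : Expressible e fun (T : UTree A) v _ => T.nsR (v x) (v y) :=
  (covers sibR x y).congr fun T _ _ => T.nsR_iff_covers ..

theorem exists_labelling [Finite R] (hP : Expressible e P) (he : Function.Injective e) :
    ∃ φ : MSO A, ∀ T v V, φ.Sat T v V ↔ ∃ c : Node → Set R, P T v c := by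
  classical
  have := Fintype.ofFinite R
  obtain ⟨φ, hφ⟩ := hP
  obtain ⟨ψ, hψ⟩ := exists_sat_iff_exists_sets φ (Finset.univ.image e)
  refine ⟨ψ, fun T v V => (hψ T v V).trans ⟨?_, ?_⟩⟩
  · rintro ⟨W, -, -, h⟩
    exact ⟨fun t => {r | t ∈ W (e r)}, (hφ T v W _ fun _ _ _ => Iff.rfl).1 h⟩
  · rintro ⟨c, h⟩
    refine ⟨fun i => if i ∈ Finset.univ.image e then {t | t ∈ T.dom ∧ ∃ r, e r = i ∧ r ∈ c t}
      else V i, ?_, ?_, (hφ T v _ c ?_).2 h⟩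
    · intro i hi t ht
      simp only [if_pos hi] at ht
      exact ht.1
    · exact fun i hi => if_neg hi
    · intro t ht r
      simp [ht, he.eq_iff]

variable [Finite R] [Finite A]

theorem label (x : ℕ) (K : Set R → A → Prop) :
    Expressible e fun (T : UTree A) v c => v x ∈ T.dom → K (c (v x)) (T.label (v x)) := by
  have value (X : Set R) (a : A) : Expressible e fun (T : UTree A) v c =>
      (v x ∈ T.dom ∧ T.label (v x) = a) ∧ ∀ r, (v x ∈ T.dom → r ∈ c (v x)) ↔ r ∈ X :=
    (lab a x).and (forall_finite fun r => (((mem r x).imp (const (r ∈ X))).and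
      ((const (r ∈ X)).imp (mem r x))).congr fun _ _ _ => iff_def)
  refine (forall_finite fun X => forall_finite fun a => (value X a).imp (const (K X a))).congr
    fun T v c => ⟨?_, fun h hx => h (c (v x)) _ ⟨⟨hx, rfl⟩, fun r => by simp [hx]⟩⟩
  rintro h X a ⟨⟨hx, rfl⟩, hX⟩
  obtain rfl : c (v x) = X := Set.ext fun r => by rw [← hX, forall_prop_of_true hx]
  exact h hx

theorem label₂ (x y : ℕ) (K : Set R → A → Set R → Prop) :
    Expressible e fun (T : UTree A) v c =>
      v x ∈ T.dom → v y ∈ T.dom → K (c (v x)) (T.label (v x)) (c (v y)) := by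
  have either (X : Set R) := (label (e := e) x fun Y a => K Y a X).or (label y fun Y _ => Y ≠ X)
  refine (forall_finite either).congr fun T v c => ⟨fun h X => ?_, fun h hx hy => ?_⟩
  · by_cases hX : v y ∈ T.dom ∧ c (v y) = X
    · exact .inl fun hx => hX.2 ▸ h hx hX.1
    · exact .inr fun hy hc => hX ⟨hy, hc⟩
  · exact (h (c (v y))).elim (fun hK => hK hx) fun hne => absurd rfl (hne hy)

theorem forall_node (U : UTree A → Node → Prop) (K : Set R → A → Prop)
    (hU : Expressible e fun T v _ => U T (v 1)) :
    Expressible e fun T _ c => ∀ s ∈ T.dom, U T s → K (c s) (T.label s) :=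
  ((hU.imp (label 1 K)).all 1).congr fun _ _ _ => by
    simp +contextual only [Function.update_self, forall_true_left]

theorem forall_pair (U : UTree A → Node → Node → Prop) (K : Set R → A → Set R → Prop)
    (hU : Expressible e fun T v _ => U T (v 1) (v 2)) :
    Expressible e fun T _ c =>
      ∀ s ∈ T.dom, ∀ t ∈ T.dom, U T s t → K (c s) (T.label s) (c t) :=
  (((hU.imp (label₂ 1 2 K)).all 2).all 1).congr fun _ _ _ => by
    simp +contextual [Function.update_of_ne]

theorem isLocalRun {H : Type} {N : NUTA A} {step : H → N.Q → H} {start : H}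
    {accept : N.Q → A → Set H} (f : Set R → N.Q × H) :
    Expressible e fun T _ c => N.IsLocalRun step start accept T fun t => f (c t) := by
  have first := forall_node (fun (T : UTree A) t => ∀ s ∈ T.dom, ¬ T.nsR s t)
    (fun (X : Set R) _ => (f X).2 = start)
    (((nsR (e := e) 0 1).not.all 0).congr fun _ _ _ => by simp)
  have next := forall_pair UTree.nsR
    (fun (X : Set R) (_ : A) Y => (f Y).2 = step (f X).2 (f X).1)
    (nsR (e := e) 1 2)
  have leaf := forall_node (fun (T : UTree A) s => ∀ t ∈ T.dom, ¬ T.childR s t)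
    (fun (X : Set R) a => start ∈ accept (f X).1 a)
    (((childR (e := e) 1 0).not.all 0).congr fun _ _ _ => by simp)
  have last := forall_pair (fun (T : UTree A) s t => T.childR s t ∧ ∀ u ∈ T.dom, ¬ T.nsR t u)
    (fun (X : Set R) a Y => step (f Y).2 (f Y).1 ∈ accept (f X).1 a)
    (((childR (e := e) 1 2).and ((nsR 2 0).not.all 0)).congr fun _ _ _ => by simp)
  exact (first.and (next.and (leaf.and last))).congr fun _ _ _ =>
    ⟨fun h => ⟨h.first, h.next, h.leaf, h.last⟩, fun ⟨h₁, h₂, h₃, h₄⟩ => ⟨h₁, h₂, h₃, h₄⟩⟩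

theorem root (K : Set R → Prop) : Expressible e fun (_ : UTree A) _ c => K (c []) := by
  have atRoot := forall_node (fun (T : UTree A) s => ∀ t ∈ T.dom, ¬ T.childR t s)
    (fun (X : Set R) _ => K X)
    (((childR (e := e) 0 1).not.all 0).congr fun _ _ _ => by simp)
  refine atRoot.congr fun T _ c => ⟨fun h s hs hroot => ?_, fun h => ?_⟩
  · rwa [T.eq_nil_of_not_childR hs hroot]
  · exact h [] T.nil_mem fun t _ ⟨_, _, i, hi⟩ => by simp at hi

end Expressible

theorem exists_definesU_existsSem [Finite A] (QA : QAut A) :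
    ∃ φ : MSO A, φ.DefinesU QA.existsSem := by
  obtain hQ | hQ := isEmpty_or_nonempty QA.N.Q
  · exact ⟨.not (.eq 0 0), fun T v V s _ =>
      ⟨fun ⟨_, ρ, _⟩ => isEmptyElim (ρ s), fun h => absurd rfl h⟩⟩
  have := QA.N.fintype_Q
  obtain ⟨H, _, step, start, accept, haccept⟩ := exists_common_dfa
    fun p : QA.N.Q × A => isRegular_matches' (QA.N.δ p.1 p.2)
  obtain ⟨e, he⟩ := Countable.exists_injective_nat (QA.N.Q × H)
  have : Nonempty H := ⟨start⟩
  have hf := Function.invFun_surjective (Set.singleton_injective (α := QA.N.Q × H))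
  set f : Set (QA.N.Q × H) → QA.N.Q × H := Function.invFun singleton
  have run := Expressible.isLocalRun (e := e) (step := step) (start := start)
    (accept := fun q a => accept (q, a)) f
  have root := Expressible.root (A := A) (e := e) fun X => (f X).1 ∈ QA.N.F
  have select := Expressible.label (e := e) 0 fun X a => ((f X).1, a) ∈ QA.S
  obtain ⟨φ, hφ⟩ := (run.and (root.and select)).exists_labelling he
  refine ⟨φ, fun T v V s hs => ?_⟩
  rw [hφ, QA.mem_existsSem_iff_exists_isLocalRun hs fun q a w => haccept (q, a) w,
    (hf.comp_left (α := Node)).exists]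
  simp only [Function.update_self, hs, forall_true_left]
  rfl

end MSO

/-! ### Duality of the two semantics -/

namespace QAut

variable {A : Type}

/-- The query automaton with the same runs and the complementary selection set: its universal
semantics is the complement of the existential semantics of `QA`. -/
def dual (QA : QAut A) : QAut A :=
  ⟨QA.N, QA.Sᶜ⟩

theorem dual_dual (QA : QAut A) : QA.dual.dual = QA :=
  congrArg (QAut.mk QA.N) (compl_compl QA.S)

theorem forallSem_dual (QA : QAut A) (T : UTree A) :
    QA.dual.forallSem T = ↑T.dom \ QA.existsSem T := by
  ext s
  simp only [forallSem, existsSem, dual, Set.mem_ofPred_eq, Set.mem_sdiff, Finset.mem_coe]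
  refine and_congr_right fun hs => ?_
  simp only [hs, true_and, not_exists, not_and]
  rfl

theorem forallSem_eq (QA : QAut A) (T : UTree A) :
    QA.forallSem T = ↑T.dom \ QA.dual.existsSem T := by
  rw [← forallSem_dual, dual_dual]

end QAut

theorem MSO.DefinesU.compl {A : Type} {φ : MSO A} {Q : UTree A → Set Node} (h : φ.DefinesU Q) :
    φ.not.DefinesU fun T => ↑T.dom \ Q T := fun T v V s hs => by
  simp [MSO.Sat, hs, h T v V s hs]

/-- For a unary query `Q` on ordered unranked Σ-trees, the
following are equivalent: (1) `Q` is MSO-definable; (2) `Q` is the existential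
semantics of some query automaton; (3) `Q` is the universal semantics of some
query automaton. -/
theorem mso_iff_query_automaton (A : Type) [Fintype A]
    (Q : UTree A → Set Node) (hQ : ∀ T, Q T ⊆ ↑T.dom) :
    ((∃ φ : MSO A, φ.DefinesU Q) ↔ ∃ QA : QAut A, ∀ T, Q T = QA.existsSem T) ∧
    ((∃ φ : MSO A, φ.DefinesU Q) ↔ ∃ QA : QAut A, ∀ T, Q T = QA.forallSem T) := by
  refine ⟨⟨?_, ?_⟩, ?_, ?_⟩
  · rintro ⟨φ, hφ⟩
    exact hφ.exists_qaut hQ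
  · rintro ⟨QA, hQA⟩
    obtain rfl : Q = QA.existsSem := funext hQA
    exact MSO.exists_definesU_existsSem QA
  · rintro ⟨φ, hφ⟩
    obtain ⟨QA, hQA⟩ := hφ.compl.exists_qaut fun T => Set.sdiff_subset
    exact ⟨QA.dual, fun T => by rw [QA.forallSem_dual, ← hQA, Set.sdiff_sdiff_cancel_left (hQ T)]⟩
  · rintro ⟨QA, hQA⟩
    obtain rfl : Q = fun T => ↑T.dom \ QA.dual.existsSem T :=
      funext fun T => (hQA T).trans (QA.forallSem_eq T)
    obtain ⟨φ, hφ⟩ := MSO.exists_definesU_existsSem QA.dual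
    exact ⟨φ.not, hφ.compl⟩

end UnrankedTrees
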